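/- arXiv:2510.05786 — 2 statements merged into one kernel-verified Lean document; each statement's English description precedes it below -/
import Mathlib

section
/- Let G = (V,E) be a DAMG and let q_G : E → ℚ be the path uniform weight function q_G(e) := π(t(e))/π(h(e)). Then the total path weight function s_G of (G, q_G) is given by s_G(x|y) = (π(x)/π(y)) · π(x,y) for all x, y ∈ V; in particular, for every root r ∈ Rt(G) and every y ∈ V, s_G(r|y) = π(r,y)/π(y). -/
open scoped Classical

/-- A directed multigraph: finite sets of vertices/edges with tail and head maps. -/
structure MGraph (V E : Type*) where
  tl : E → V
  hd : E → V

namespace MGraph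

variable {V E R A : Type*}

/-- `G` is a directed acyclic multigraph (DAMG) if it admits a topological ordering,
i.e. a linear (injective) order on the vertices such that tails precede heads. -/
def IsDAMG (G : MGraph V E) : Prop :=
  ∃ ord : V → ℕ, Function.Injective ord ∧ ∀ e : E, ord (G.tl e) < ord (G.hd e)

/-- `G.IsPath x y l` : the list of edges `l` is a directed path from `x` to `y`. -/
def IsPath (G : MGraph V E) : V → V → List E → Prop
  | x, y, [] => x = y
  | x, y, e :: es => G.tl e = x ∧ G.IsPath (G.hd e) y es

/-- the set `E(x,y)` of edges from `x` to `y` -/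
def edges (G : MGraph V E) (x y : V) : Set E := {e | G.tl e = x ∧ G.hd e = y}

/-- there is a directed path from `x` to `y` (possibly trivial) -/
def Reaches (G : MGraph V E) (x y : V) : Prop := ∃ l : List E, G.IsPath x y l

/-- ancestors of `y` (including `y`) -/
def anc (G : MGraph V E) (y : V) : Set V := {x | G.Reaches x y}

/-- descendants of `x` (including `x`) -/
def desc (G : MGraph V E) (x : V) : Set V := {y | G.Reaches x y}

/-- parents of `y` -/
def pa (G : MGraph V E) (y : V) : Set V := {x | ∃ e : E, G.tl e = x ∧ G.hd e = y}

/-- roots (sources) of `G` -/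
def roots (G : MGraph V E) : Set V := {x | G.pa x = ∅}

/-- leaves (sinks) of `G` -/
def leaves (G : MGraph V E) : Set V := {x | ∀ e : E, G.tl e ≠ x}

/-- `π(x,y)` : the number of directed paths from `x` to `y` -/
noncomputable def nPaths (G : MGraph V E) (x y : V) : ℕ :=
  {l : List E | G.IsPath x y l}.ncard

/-- `π(y)` : the number of directed paths from roots to `y` -/
noncomputable def nPathsRt (G : MGraph V E) (y : V) : ℕ :=
  ∑ᶠ r ∈ G.roots, G.nPaths r y

/-- pairwise weight `q(x|y) := Σ_{e ∈ E(x,y)} q(e)` -/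
noncomputable def pw [AddCommMonoid R] (G : MGraph V E) (q : E → R) (x y : V) : R :=
  ∑ᶠ e ∈ G.edges x y, q e

/-- a weight function is normalized if pairwise weights into any non-root sum to 1 -/
def Normalized [CommRing R] (G : MGraph V E) (q : E → R) : Prop :=
  ∀ y : V, y ∉ G.roots → (∑ᶠ x : V, G.pw q x y) = 1

/-- `w` is the Möbius transform (synergy function) of `v` w.r.t. `G` -/
def IsMoebiusTransform [AddCommGroup A] (G : MGraph V E) (v w : V → A) : Prop :=
  ∀ x : V, w x = v x - ∑ᶠ y ∈ G.anc x \ {x}, w y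

/-- `μ` is the Möbius function of `G` -/
def IsMoebiusFunction (G : MGraph V E) (μ : V → V → ℤ) : Prop :=
  (∀ x y : V, x ∉ G.anc y → μ x y = 0) ∧
  (∀ x : V, μ x x = 1) ∧
  (∀ x y : V, x ∈ G.anc y → x ≠ y →
    μ x y = -(∑ᶠ z ∈ (G.desc x ∩ G.anc y) \ {y}, μ x z))

/-- `s` is the total path weight function of the edge weight function `q` -/
def IsTotalWeight [CommRing R] (G : MGraph V E) (q : E → R) (s : V → V → R) : Prop :=
  (∀ x y : V, y ∉ G.desc x → s x y = 0) ∧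
  (∀ x : V, s x x = 1) ∧
  (∀ x y : V, y ∈ G.desc x → y ≠ x → s x y = ∑ᶠ z ∈ G.pa y, s x z * G.pw q z y)

/-- `τ : V → R` is the extension of a root weight function via the recursion
`τ(y) = Σ_{z ∈ Pa(y)} τ(z)·ς(z,y)` for non-roots `y` -/
def IsRootExtension [CommRing R] (G : MGraph V E) (ς : E → R) (τ : V → R) : Prop :=
  ∀ y : V, y ∉ G.roots → τ y = ∑ᶠ z ∈ G.pa y, τ z * G.pw ς z y

/-- the list of vertices visited by a path starting at `x` -/
def pathVerts (G : MGraph V E) (x : V) (l : List E) : List V := x :: l.map G.hd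

/-- `X` is a horizontal subset of `G` : every directed path from a root to a leaf
contains exactly one element of `X` -/
def Horizontal (G : MGraph V E) (X : Set V) : Prop :=
  ∀ r ∈ G.roots, ∀ lf ∈ G.leaves, ∀ p : List E, G.IsPath r lf p →
    (G.pathVerts r p).countP (fun v => decide (v ∈ X)) = 1

/-- the path uniform weight function `q_G(e) := π(t(e))/π(h(e))` -/
noncomputable def pathUniform (G : MGraph V E) : E → ℚ :=
  fun e => (G.nPathsRt (G.tl e) : ℚ) / (G.nPathsRt (G.hd e) : ℚ)

/-- the unanimity value function centred at `y` -/
noncomputable def zeta [CommRing R] (G : MGraph V E) (y : V) : V → R :=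
  fun x => if x ∈ G.desc y then (1 : R) else 0

/-! ### Projection onto the complement of a single element -/

/-- the edge type of the projection `G^{∖z}` :
old edges avoiding `z`, together with a new edge for every pair of edges through `z` -/
def proj1E (G : MGraph V E) (z : V) : Type _ :=
  {e : E // G.tl e ≠ z ∧ G.hd e ≠ z} ⊕
  {p : E × E // G.hd p.1 = z ∧ G.tl p.2 = z ∧ G.tl p.1 ≠ z ∧ G.hd p.2 ≠ z}

/-- the projection `G^{∖z}` of `G` onto the complement of `z` -/
def proj1 (G : MGraph V E) (z : V) : MGraph {x : V // x ≠ z} (G.proj1E z) where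
  tl := Sum.elim (fun e => ⟨G.tl e.1, e.2.1⟩) (fun p => ⟨G.tl p.1.1, p.2.2.2.1⟩)
  hd := Sum.elim (fun e => ⟨G.hd e.1, e.2.2⟩) (fun p => ⟨G.hd p.1.2, p.2.2.2.2⟩)

/-- the projected weight function `q^{∖z}` -/
def proj1Q [CommRing R] (G : MGraph V E) (z : V) (q : E → R) : G.proj1E z → R :=
  Sum.elim (fun e => q e.1) (fun p => q p.1.1 * q p.1.2)

/-- the single-element projection `w^{∖z}(x) := w(x) + q(x|z)·w(z)` of a synergy function -/
noncomputable def wProjOne [CommRing R] [AddCommGroup A] [Module R A]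
    (G : MGraph V E) (q : E → R) (w : V → A) (z : V) : {x : V // x ≠ z} → A :=
  fun x => w x.1 + G.pw q x.1 z • w z

/-! ### Projection onto the complement of a subset -/

/-- consecutive edges of the list compose -/
def IsChain (G : MGraph V E) : List E → Prop
  | [] => True
  | [_] => True
  | e :: e' :: es => G.hd e = G.tl e' ∧ G.IsChain (e' :: es)

/-- the interior vertices of a path (all visited vertices except the endpoints) -/
def interior (G : MGraph V E) : List E → List V
  | [] => []
  | [_] => []
  | e :: e' :: es => G.hd e :: G.interior (e' :: es)

/-- an edge of the projection `G^{∖S}` : a nonempty directed path of `G` whose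
interior vertices lie in `S` and whose endpoints lie outside `S`
(iterating `E^{∖z}(x,y) := E(x,y) ⊔ (E(x,z) × E(z,y))` over the elements of `S`) -/
structure ProjEdge (G : MGraph V E) (S : Set V) where
  first : E
  rest : List E
  chain : G.IsChain (first :: rest)
  tl_notin : G.tl first ∉ S
  hd_notin : G.hd ((first :: rest).getLast (List.cons_ne_nil _ _)) ∉ S
  interior_mem : ∀ v ∈ G.interior (first :: rest), v ∈ S

/-- the projection `G^{∖S}` of `G` onto the complement of the subset `S` -/
def projG (G : MGraph V E) (S : Set V) : MGraph {x : V // x ∉ S} (G.ProjEdge S) where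
  tl := fun p => ⟨G.tl p.first, p.tl_notin⟩
  hd := fun p => ⟨G.hd ((p.first :: p.rest).getLast (List.cons_ne_nil _ _)), p.hd_notin⟩

/-- the projected weight function `q^{∖S}` (weights multiply along collapsed paths) -/
def projQ [CommRing R] (G : MGraph V E) (S : Set V) (q : E → R) :
    G.ProjEdge S → R :=
  fun p => ((p.first :: p.rest).map q).prod

/-! ### Iterated one-element projections of pairwise weights and synergy functions -/

/-- one projection step on pairwise weights: `q^{∖z}(x|y) = q(x|y) + q(x|z)·q(z|y)` -/
def pwStep [CommRing R] (Q : V → V → R) (z : V) : V → V → R :=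
  fun x y => Q x y + Q x z * Q z y

/-- one projection step on a synergy function: `w^{∖z}(x) = w(x) + q(x|z)·w(z)` -/
def wStep [CommRing R] [AddCommGroup A] [Module R A]
    (Q : V → V → R) (w : V → A) (z : V) : V → A :=
  fun x => w x + Q x z • w z

/-- iterated one-element projections along a list of vertices -/
def projIter [CommRing R] [AddCommGroup A] [Module R A] :
    List V → (V → V → R) → (V → A) → ((V → V → R) × (V → A))
  | [], Q, w => (Q, w)
  | z :: zs, Q, w => projIter zs (pwStep Q z) (wStep Q w z)

/-! ### Subgraph on a subset of vertices -/

/-- edges of `G` with both endpoints in `S` -/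
def subE (G : MGraph V E) (S : Set V) : Type _ := {e : E // G.tl e ∈ S ∧ G.hd e ∈ S}

/-- the subgraph of `G` on the vertex subset `S` -/
def subgraph (G : MGraph V E) (S : Set V) : MGraph ↥S (G.subE S) where
  tl := fun e => ⟨G.tl e.1, e.2.1⟩
  hd := fun e => ⟨G.hd e.1, e.2.2⟩

/-- the canonical identification `(V∖{z})∖{u} ≃ (V∖{u})∖{z}` -/
def swapCompl (z u : V) (hzu : z ≠ u) :
    {y : {x : V // x ≠ z} // y ≠ ⟨u, Ne.symm hzu⟩} ≃
      {y : {x : V // x ≠ u} // y ≠ ⟨z, hzu⟩} where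
  toFun y := ⟨⟨y.1.1, fun h => y.2 (Subtype.ext h)⟩, fun h => y.1.2 (congrArg Subtype.val h)⟩
  invFun y := ⟨⟨y.1.1, fun h => y.2 (Subtype.ext h)⟩, fun h => y.1.2 (congrArg Subtype.val h)⟩
  left_inv y := rfl
  right_inv y := rfl

end MGraph

/-!
The total path weight `s(x|y)` is the sum over all directed paths from `x` to `y` of the products of
the edge weights along the path, since both sides satisfy the same recursion over the last edge.
If `q(e) = φ(t(e)) / φ(h(e))` for a nowhere vanishing vertex function `φ`, every such product
telescopes to `φ(x) / φ(y)`, so that `s(x|y) = φ(x) / φ(y) · π(x,y)`. The path uniform weights are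
the case `φ = π`, which vanishes nowhere because every vertex has a root ancestor.
-/

namespace MGraph

section PathWeights

variable {V E R : Type*} {G : MGraph V E} {x y r : V} {l : List E}

/-- The set of edges of `G` with head `y`, used to decompose a nontrivial path into `y` by its last
edge. -/
def inEdges (G : MGraph V E) (y : V) : Set E := {e | G.hd e = y}

/-- The sum over all directed paths from `x` to `y` of the products of the edge weights `q` along
the path: the closed form of the total path weight `s(x|y)`. It is `0`, as for any `finsum`, when
infinitely many paths have a nonzero product. -/
noncomputable def pathSum [Semiring R] (G : MGraph V E) (q : E → R) (x y : V) : R :=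
  ∑ᶠ l ∈ {l : List E | G.IsPath x y l}, (l.map q).prod

theorem isPath_append_singleton {e : E} :
    G.IsPath x y (l ++ [e]) ↔ G.IsPath x (G.tl e) l ∧ G.hd e = y := by
  induction l generalizing x with
  | nil => simp only [List.nil_append, IsPath, eq_comm]
  | cons a l ih => simp only [List.cons_append, IsPath, ih, and_assoc]

theorem isPath_iff_exists_last :
    G.IsPath x y l ↔
      (x = y ∧ l = []) ∨ ∃ e ∈ G.inEdges y, ∃ l', G.IsPath x (G.tl e) l' ∧ l' ++ [e] = l := by
  rcases List.eq_nil_or_concat' l with rfl | ⟨l, e, rfl⟩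
  · simp [IsPath]
  · simp [isPath_append_singleton, inEdges, and_comm]

theorem tl_mem_pa {e : E} (he : e ∈ G.inEdges y) : G.tl e ∈ G.pa y :=
  ⟨e, rfl, he⟩

theorem IsPath.reflTransGen (hl : G.IsPath x y l) :
    Relation.ReflTransGen (fun z w => z ∈ G.pa w) x y := by
  induction l generalizing x with
  | nil => exact hl ▸ .refl
  | cons e l ih => exact .head ⟨e, hl.1, rfl⟩ (ih hl.2)

theorem isPath_self_iff (hwf : WellFounded fun z w => z ∈ G.pa w) :
    G.IsPath x x l ↔ l = [] := by
  refine ⟨fun hl => ?_, fun hl => hl ▸ rfl⟩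
  rcases isPath_iff_exists_last.1 hl with ⟨-, rfl⟩ | ⟨e, he, l', hl', -⟩
  · rfl
  · exact (hwf.transGen.irrefl.irrefl x (.tail' hl'.reflTransGen (tl_mem_pa he))).elim

theorem isPath_iff_of_mem_roots (hr : r ∈ G.roots) :
    G.IsPath x r l ↔ x = r ∧ l = [] := by
  have no_inEdges : ∀ e, e ∉ G.inEdges r := fun e he =>
    Set.eq_empty_iff_forall_notMem.1 hr _ (tl_mem_pa he)
  simp [isPath_iff_exists_last (y := r), no_inEdges]

theorem exists_mem_roots_reaches (hwf : WellFounded fun z w => z ∈ G.pa w) (y : V) :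
    ∃ r ∈ G.roots, G.Reaches r y := by
  induction y using hwf.induction with
  | _ y ih =>
    by_cases hy : y ∈ G.roots
    · exact ⟨y, hy, [], rfl⟩
    · obtain ⟨z, hz⟩ := Set.nonempty_iff_ne_empty.2 hy
      obtain ⟨r, hr, l, hl⟩ := ih z hz
      obtain ⟨e, rfl, he⟩ := hz
      exact ⟨r, hr, l ++ [e], isPath_append_singleton.2 ⟨hl, he⟩⟩

theorem IsDAMG.wellFounded_pa (hG : G.IsDAMG) : WellFounded fun z w => z ∈ G.pa w := by
  obtain ⟨ord, -, tl_lt_hd⟩ := hG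
  refine Subrelation.wf (r := InvImage (· < ·) ord) ?_ (InvImage.wf ord Nat.lt_wfRel.wf)
  rintro _ _ ⟨e, rfl, rfl⟩
  exact tl_lt_hd e

section Finiteness

variable (hwf : WellFounded fun z w => z ∈ G.pa w) (hin : ∀ y, (G.inEdges y).Finite)
include hwf hin

theorem finite_isPath_into (y : V) : {p : V × List E | G.IsPath p.1 y p.2}.Finite := by
  induction y using hwf.induction with
  | _ y ih =>
    have finite_last : (⋃ e ∈ G.inEdges y, Prod.map id (· ++ [e]) ''
        {p : V × List E | G.IsPath p.1 (G.tl e) p.2}).Finite :=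
      (hin y).biUnion fun e he => (ih _ (tl_mem_pa he)).image _
    refine (finite_last.insert (y, [])).subset ?_
    rintro ⟨x, l⟩ hl
    rcases isPath_iff_exists_last.1 hl with ⟨rfl, rfl⟩ | ⟨e, he, l', hl', rfl⟩
    · exact Set.mem_insert _ _
    · exact Set.mem_insert_of_mem _ (Set.mem_biUnion he ⟨(x, l'), hl', rfl⟩)

theorem finite_isPath (x y : V) : {l : List E | G.IsPath x y l}.Finite :=
  (finite_isPath_into hwf hin y).preimage (f := Prod.mk x) (Prod.mk_right_injective x).injOn

theorem finite_anc (y : V) : (G.anc y).Finite := by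
  refine ((finite_isPath_into hwf hin y).image Prod.fst).subset ?_
  rintro x ⟨l, hl⟩
  exact ⟨(x, l), hl, rfl⟩

theorem nPaths_pos (h : G.Reaches x y) : 0 < G.nPaths x y :=
  (Set.ncard_pos (finite_isPath hwf hin x y)).2 h

theorem nPathsRt_pos (y : V) : 0 < G.nPathsRt y := by
  obtain ⟨r, hr, hry⟩ := exists_mem_roots_reaches hwf y
  refine finsum_cond_pos (fun _ _ => Nat.zero_le _)
    ⟨r, hr, nPaths_pos hwf hin hry⟩ ((finite_anc hwf hin y).subset ?_)
  rintro x ⟨hx, -⟩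
  exact Set.nonempty_of_ncard_ne_zero hx

end Finiteness

theorem nPathsRt_of_mem_roots (hr : r ∈ G.roots) : G.nPathsRt r = 1 := by
  have nPaths_self : G.nPaths r r = 1 := by
    simp [nPaths, isPath_iff_of_mem_roots hr]
  have nPaths_ne (z : V) (hz : z ≠ r) : G.nPaths z r = 0 := by
    simp [nPaths, isPath_iff_of_mem_roots hr, hz]
  rw [nPathsRt, finsum_eq_single _ r fun z hz => by simp only [nPaths_ne z hz, finsum_zero]]
  simp only [hr, finsum_true, nPaths_self]

theorem finsum_pa_mul_pw [Semiring R] (hin : (G.inEdges y).Finite) (q : E → R) (f : V → R) :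
    ∑ᶠ z ∈ G.pa y, f z * G.pw q z y = ∑ᶠ e ∈ G.inEdges y, f (G.tl e) * q e := by
  have finite_edges (z : V) : (G.edges z y).Finite := hin.subset fun _ he => he.2
  have finite_pa : (G.pa y).Finite := (hin.image G.tl).subset fun _ ⟨e, hz, hy⟩ => ⟨e, hy, hz⟩
  have inEdges_eq : G.inEdges y = ⋃ z ∈ G.pa y, G.edges z y :=
    Set.Subset.antisymm (fun _ he => Set.mem_biUnion (tl_mem_pa he) ⟨rfl, he⟩)
      (Set.iUnion₂_subset fun _ _ _ he => he.2)
  have disjoint_edges : (G.pa y).PairwiseDisjoint fun z => G.edges z y :=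
    fun z _ w _ hzw => Set.disjoint_left.2 fun e hz hw => hzw (hz.1.symm.trans hw.1)
  rw [inEdges_eq, finsum_mem_biUnion disjoint_edges finite_pa fun z _ => finite_edges z]
  refine finsum_mem_congr rfl fun z _ => ?_
  rw [pw, mul_finsum_mem' _ _ (finite_edges z)]
  exact finsum_mem_congr rfl fun e he => by rw [he.1]

section PathSum

variable [Semiring R] (q : E → R)

theorem pathSum_of_not_reaches (h : ¬ G.Reaches x y) : G.pathSum q x y = 0 :=
  finsum_mem_of_eqOn_zero fun l hl => (h ⟨l, hl⟩).elim

theorem pathSum_self (hwf : WellFounded fun z w => z ∈ G.pa w) (x : V) :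
    G.pathSum q x x = 1 := by
  simp [pathSum, isPath_self_iff hwf]

theorem pathSum_of_ne (hwf : WellFounded fun z w => z ∈ G.pa w)
    (hin : ∀ y, (G.inEdges y).Finite) (hxy : x ≠ y) :
    G.pathSum q x y = ∑ᶠ e ∈ G.inEdges y, G.pathSum q x (G.tl e) * q e := by
  have isPath_eq : {l | G.IsPath x y l} =
      ⋃ e ∈ G.inEdges y, (· ++ [e]) '' {l | G.IsPath x (G.tl e) l} := by
    ext l
    simp [isPath_iff_exists_last (y := y), hxy]
  have disjoint_last : (G.inEdges y).PairwiseDisjoint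
      fun e => (· ++ [e]) '' {l | G.IsPath x (G.tl e) l} := by
    refine fun e _ e' _ hee' => Set.disjoint_left.2 ?_
    rintro _ ⟨l, -, rfl⟩ ⟨l', -, h⟩
    exact hee' (List.append_singleton_inj.1 h).2.symm
  rw [pathSum, isPath_eq, finsum_mem_biUnion disjoint_last (hin y)
    fun e _ => (finite_isPath hwf hin x _).image _]
  refine finsum_mem_congr rfl fun e _ => ?_
  rw [finsum_mem_image (List.append_left_injective [e]).injOn, pathSum,
    finsum_mem_mul' _ _ (finite_isPath hwf hin x _)]
  simp only [List.map_append, List.map_singleton, List.prod_append, List.prod_singleton]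

end PathSum

theorem IsTotalWeight.eq_pathSum [CommRing R] {q : E → R} {s : V → V → R}
    (hs : G.IsTotalWeight q s) (hwf : WellFounded fun z w => z ∈ G.pa w)
    (hin : ∀ y, (G.inEdges y).Finite) (x y : V) : s x y = G.pathSum q x y := by
  obtain ⟨eq_zero, self_eq_one, recursion⟩ := hs
  induction y using hwf.induction with
  | _ y ih =>
    by_cases hy : y ∈ G.desc x
    · obtain rfl | hxy := eq_or_ne x y
      · rw [self_eq_one, pathSum_self q hwf]
      · rw [recursion x y hy hxy.symm, finsum_pa_mul_pw (hin y), pathSum_of_ne q hwf hin hxy]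
        exact finsum_mem_congr rfl fun e he => by rw [ih _ (tl_mem_pa he)]
    · rw [eq_zero x y hy, pathSum_of_not_reaches q hy]

section Potential

variable {K : Type*} {φ : V → K}

theorem IsPath.prod_map_div [GroupWithZero K] (hφ : ∀ v, φ v ≠ 0) (hl : G.IsPath x y l) :
    (l.map fun e => φ (G.tl e) / φ (G.hd e)).prod = φ x / φ y := by
  induction l generalizing x with
  | nil => rw [show x = y from hl, List.map_nil, List.prod_nil, div_self (hφ y)]
  | cons e l ih =>
    rw [List.map_cons, List.prod_cons, ih hl.2, hl.1, div_mul_div_cancel₀ (hφ _)]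

theorem pathSum_div [DivisionRing K] (hφ : ∀ v, φ v ≠ 0)
    (h : {l | G.IsPath x y l}.Finite) :
    G.pathSum (fun e => φ (G.tl e) / φ (G.hd e)) x y = φ x / φ y * G.nPaths x y := by
  calc G.pathSum (fun e => φ (G.tl e) / φ (G.hd e)) x y
      = ∑ᶠ l ∈ {l | G.IsPath x y l}, φ x / φ y :=
        finsum_mem_congr rfl fun _ hl => IsPath.prod_map_div hφ hl
    _ = φ x / φ y * G.nPaths x y := by
        rw [finsum_mem_eq_finite_toFinset_sum _ h, Finset.sum_const, nsmul_eq_mul', nPaths,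
          Set.ncard_eq_toFinset_card _ h]

theorem IsTotalWeight.eq_div_mul_nPaths [Field K] {s : V → V → K}
    (hs : G.IsTotalWeight (fun e => φ (G.tl e) / φ (G.hd e)) s) (hφ : ∀ v, φ v ≠ 0)
    (hwf : WellFounded fun z w => z ∈ G.pa w) (hin : ∀ y, (G.inEdges y).Finite) (x y : V) :
    s x y = φ x / φ y * G.nPaths x y := by
  rw [hs.eq_pathSum hwf hin, pathSum_div hφ (finite_isPath hwf hin x y)]

end Potential

end PathWeights

end MGraph

theorem path_uniform_total_weights_general {V E : Type*} (G : MGraph V E)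
    (hwf : WellFounded fun z w => z ∈ G.pa w) (hin : ∀ y, (G.inEdges y).Finite)
    (s : V → V → ℚ) (hs : G.IsTotalWeight G.pathUniform s) :
    (∀ x y : V,
      s x y = ((G.nPathsRt x : ℚ) / (G.nPathsRt y : ℚ)) * (G.nPaths x y : ℚ)) ∧
    (∀ r ∈ G.roots, ∀ y : V, s r y = (G.nPaths r y : ℚ) / (G.nPathsRt y : ℚ)) := by
  have nPathsRt_ne_zero (v : V) : (G.nPathsRt v : ℚ) ≠ 0 :=
    Nat.cast_ne_zero.2 (MGraph.nPathsRt_pos hwf hin v).ne'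
  have eq_div_mul (x y : V) :
      s x y = ((G.nPathsRt x : ℚ) / (G.nPathsRt y : ℚ)) * (G.nPaths x y : ℚ) :=
    MGraph.IsTotalWeight.eq_div_mul_nPaths (φ := fun v => (G.nPathsRt v : ℚ)) hs
      nPathsRt_ne_zero hwf hin x y
  refine ⟨eq_div_mul, fun r hr y => ?_⟩
  rw [eq_div_mul, MGraph.nPathsRt_of_mem_roots hr, Nat.cast_one, one_div_mul_eq_div]

/-- **Path uniform total path weights.**
For the path uniform weight function `q_G(e) := π(t(e))/π(h(e))` of the DAMG `G`,
the total path weight function `s_G` of `(G, q_G)` satisfies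
`s_G(x|y) = (π(x)/π(y))·π(x,y)` for all `x, y ∈ V`; in particular for every root
`r` and every `y`: `s_G(r|y) = π(r,y)/π(y)`. -/
theorem path_uniform_total_weights
    {V E : Type*} [Finite V] [Finite E]
    (G : MGraph V E) (hG : G.IsDAMG)
    (s : V → V → ℚ) (hs : G.IsTotalWeight G.pathUniform s) :
    (∀ x y : V,
      s x y = ((G.nPathsRt x : ℚ) / (G.nPathsRt y : ℚ)) * (G.nPaths x y : ℚ)) ∧
    (∀ r ∈ G.roots, ∀ y : V, s r y = (G.nPaths r y : ℚ) / (G.nPathsRt y : ℚ)) :=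
  path_uniform_total_weights_general G hG.wellFounded_pa (fun _ => Set.toFinite _) s hs
end

section
/- Let G = (V,E) be a DAMG, R a commutative ring, q : E → R a weight function, A an R-module, v : V → A a value function with Möbius transform w = v', and z ∈ V. If y ∈ V∖{z} is a null element for (G,v), then y is a null element for (G^{∖z}, v^{∖z}); that is, the Möbius transform of v^{∖z} with respect to G^{∖z} (which equals w^{∖z}) vanishes on all of Desc^{G^{∖z}}(y). -/
open scoped Classical

/-!
Every edge of `G^{∖z}` is an edge of `G` or a pair of composable edges of `G`, so a descendant of
`y` in `G^{∖z}` is a descendant of `y` in `G`, where `w` vanishes. The correction term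
`q(x|z) • w(z)` at such an `x` vanishes as well: an edge from `x` to `z` makes `z` a descendant
of `y`, and if there is none then `q(x|z) = 0`.
-/

namespace MGraph

section Reachability

variable {V E V' E' : Type*} {G : MGraph V E}

theorem IsPath.append {x y u : V} {l m : List E} (hl : G.IsPath x y l) (hm : G.IsPath y u m) :
    G.IsPath x u (l ++ m) := by
  induction l generalizing x with
  | nil =>
    obtain rfl : x = y := hl
    exact hm
  | cons e l ih => exact ⟨hl.1, ih hl.2⟩

theorem Reaches.refl (x : V) : G.Reaches x x :=
  ⟨[], rfl⟩

theorem Reaches.trans {x y u : V} (hxy : G.Reaches x y) (hyu : G.Reaches y u) : G.Reaches x u := by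
  obtain ⟨l, hl⟩ := hxy
  obtain ⟨m, hm⟩ := hyu
  exact ⟨l ++ m, hl.append hm⟩

theorem reaches_of_mem_edges {x y : V} {e : E} (he : e ∈ G.edges x y) : G.Reaches x y :=
  ⟨[e], he⟩

theorem Reaches.lift {H : MGraph V' E'} (f : V' → V)
    (hf : ∀ e, G.Reaches (f (H.tl e)) (f (H.hd e))) {x y : V'} (h : H.Reaches x y) :
    G.Reaches (f x) (f y) := by
  obtain ⟨l, hl⟩ := h
  induction l generalizing x with
  | nil =>
    obtain rfl : x = y := hl
    exact Reaches.refl (f x)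
  | cons e l ih =>
    obtain ⟨rfl, hl⟩ := hl
    exact (hf e).trans (ih hl)

theorem reaches_of_proj1E {z : V} (e : G.proj1E z) :
    G.Reaches ((G.proj1 z).tl e : V) ((G.proj1 z).hd e : V) := by
  rcases e with ⟨e, -⟩ | ⟨⟨e₁, e₂⟩, h₁, h₂, -⟩
  · exact reaches_of_mem_edges ⟨rfl, rfl⟩
  · have to_z : G.Reaches (G.tl e₁) z := reaches_of_mem_edges ⟨rfl, h₁⟩
    have from_z : G.Reaches z (G.hd e₂) := reaches_of_mem_edges ⟨h₂, rfl⟩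
    exact to_z.trans from_z

theorem Reaches.of_proj1 {z : V} {x y : {x : V // x ≠ z}} (h : (G.proj1 z).Reaches x y) :
    G.Reaches (x : V) (y : V) :=
  h.lift Subtype.val reaches_of_proj1E

end Reachability

theorem pw_eq_zero_of_edges_eq_empty {V E R : Type*} [AddCommMonoid R] {G : MGraph V E} {x y : V}
    (h : G.edges x y = ∅) (q : E → R) : G.pw q x y = 0 := by
  rw [pw, h, finsum_mem_empty]

section NullElement

variable {V E R A : Type*} {G : MGraph V E} {w : V → A} {x y z : V}

/-- `y` is a null element for `(G, v)`, in terms of the Möbius transform `w` of `v` instead of `v`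
itself: every `w` is the Möbius transform of exactly one `v`. -/
def IsNullElement [Zero A] (G : MGraph V E) (w : V → A) (y : V) : Prop :=
  ∀ x ∈ G.desc y, w x = 0

theorem IsNullElement.pw_smul_eq_zero [AddCommMonoid R] [Zero A] [SMulWithZero R A]
    (h : G.IsNullElement w y) (q : E → R) (hx : x ∈ G.desc y) : G.pw q x z • w z = 0 := by
  obtain hE | ⟨e, he⟩ := (G.edges x z).eq_empty_or_nonempty
  · rw [pw_eq_zero_of_edges_eq_empty hE, zero_smul]
  · have hz : z ∈ G.desc y := Reaches.trans hx (reaches_of_mem_edges he)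
    rw [h z hz, smul_zero]

theorem IsNullElement.proj1 [CommRing R] [AddCommGroup A] [Module R A]
    (h : G.IsNullElement w y) (q : E → R) (hy : y ≠ z) :
    (G.proj1 z).IsNullElement (G.wProjOne q w z) ⟨y, hy⟩ := by
  intro x hx
  have hx' : (x : V) ∈ G.desc y := Reaches.of_proj1 hx
  rw [wProjOne, h x hx', h.pw_smul_eq_zero q hx', add_zero]

end NullElement

end MGraph

theorem proj1_null_element_general
    {V E R A : Type*} [CommRing R] [AddCommGroup A] [Module R A]
    (G : MGraph V E) (q : E → R) (v w : V → A) (_hw : G.IsMoebiusTransform v w)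
    (z y : V) (hy : y ≠ z) (hnull : G.IsNullElement w y) :
    (G.proj1 z).IsNullElement (G.wProjOne q w z) ⟨y, hy⟩ :=
  hnull.proj1 q hy

/-- **Null elements are stable under projection.**
Let `q` be a weight function on the DAMG `G`, `w` the Möbius transform of `v`,
`z ∈ V`, and `y ∈ V∖{z}` a null element for `(G,v)` (i.e. `w` vanishes on
`Desc^G(y)`). Then `y` is a null element for `(G^{∖z}, v^{∖z})`: the Möbius
transform of `v^{∖z}` w.r.t. `G^{∖z}` — which is the projection
`w^{∖z}(x) = w(x) + q(x|z)·w(z)` — vanishes on all of `Desc^{G^{∖z}}(y)`. -/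
theorem proj1_null_element
    {V E R A : Type*} [Finite V] [Finite E] [CommRing R] [AddCommGroup A] [Module R A]
    (G : MGraph V E) (hG : G.IsDAMG)
    (q : E → R)
    (v w : V → A) (hw : G.IsMoebiusTransform v w)
    (z y : V) (hy : y ≠ z)
    (hnull : ∀ x ∈ G.desc y, w x = 0) :
    ∀ x : {x : V // x ≠ z}, x ∈ (G.proj1 z).desc ⟨y, hy⟩ →
      w x.1 + G.pw q x.1 z • w z = 0 :=
  proj1_null_element_general G q v w hw z y hy hnull
end
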